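/- For every n ≥ 1 and every g ∈ Γ(2), there exists exactly one pair (i,j) with 0 ≤ i,j ≤ n−1 such that g·(A^i B^j)⁻¹ lies in Φ±(n); that is, the matrices A^i B^j for 0 ≤ i,j ≤ n−1 form a complete set of right coset representatives of Φ(n) in Γ(2) modulo ±I. -/

import Mathlib

/-!
The argument has two halves, both resting on the description of `Γ(2)` as `{±1} × ⟨A, B⟩` with
`⟨A, B⟩` free on `A` and `B`.

* The Euclidean algorithm on the first column shows that every element of `Γ(2)` is `± w(A, B)`
  for a word `w` (`mem_Gamma2_word`). Modulo `Γ(2)'` such an element is `± A^p B^q`, and reducing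
  `p`, `q` modulo `n` gives the existence of the representative.
* The ping-pong lemma shows that `A` and `B` are free generators (`word_injective`), and every word
  in them has upper left entry `≡ 1 mod 4` (`word_mod_four`), so `-1` is not such a word.
  Hence vanishing of the exponent sums of `w` modulo `n` is a condition on `± w(A, B)` itself. It
  cuts out a subgroup `expSub n` containing `Φ±(n)`, and `A^i B^j (A^k B^l)⁻¹` lies in it only if
  `i ≡ k` and `j ≡ l` modulo `n`.
-/

open Matrix

/-- `Γ(2)`, the principal congruence subgroup of level 2 in `SL(2, ℤ)`. -/
def Gamma2 : Subgroup (Matrix.SpecialLinearGroup (Fin 2) ℤ) := CongruenceSubgroup.Gamma 2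

/-- The matrix `A = [[1,2],[0,1]]` in `SL(2, ℤ)`. -/
def Amat : Matrix.SpecialLinearGroup (Fin 2) ℤ :=
  ⟨!![1, 2; 0, 1], by norm_num [Matrix.det_fin_two_of]⟩

/-- The matrix `B = [[1,0],[2,1]]` in `SL(2, ℤ)`. -/
def Bmat : Matrix.SpecialLinearGroup (Fin 2) ℤ :=
  ⟨!![1, 0; 2, 1], by norm_num [Matrix.det_fin_two_of]⟩

/-- The Fermat group `Φ(n)`: the subgroup of `SL(2, ℤ)` generated by `A^n`, `B^n` and the
commutator subgroup `Γ(2)'` of `Γ(2)`. -/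
def Phi (n : ℕ) : Subgroup (Matrix.SpecialLinearGroup (Fin 2) ℤ) :=
  Subgroup.closure {Amat ^ n, Bmat ^ n} ⊔ ⁅Gamma2, Gamma2⁆

/-- `Φ±(n)`: the subgroup of `SL(2, ℤ)` generated by `A^n`, `B^n`, `-I` and the commutator
subgroup of `Γ(2)`; the preimage in `SL(2, ℤ)` of the image of `Φ(n)` in `PSL(2, ℤ)`. -/
def PhiPM (n : ℕ) : Subgroup (Matrix.SpecialLinearGroup (Fin 2) ℤ) :=
  Subgroup.closure {Amat ^ n, Bmat ^ n, -1} ⊔ ⁅Gamma2, Gamma2⁆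


/-- Evaluation of words at the matrices: `true ↦ A`, `false ↦ B`. -/
def word : FreeGroup Bool →* Matrix.SpecialLinearGroup (Fin 2) ℤ :=
  FreeGroup.lift fun t => if t then Amat else Bmat

/-- The pair of exponent sums of a word (in `A`, in `B`) modulo `n`. -/
def expSum (n : ℕ) : FreeGroup Bool →* Multiplicative (ZMod n × ZMod n) :=
  FreeGroup.lift fun t => Multiplicative.ofAdd (if t then (1, 0) else (0, 1))

@[simp] lemma word_true : word (FreeGroup.of true) = Amat := by simp [word]

@[simp] lemma word_false : word (FreeGroup.of false) = Bmat := by simp [word]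

lemma Amat_mul_apply (g : Matrix.SpecialLinearGroup (Fin 2) ℤ) (j : Fin 2) :
    (Amat * g) 0 j = g 0 j + 2 * g 1 j ∧ (Amat * g) 1 j = g 1 j := by
  simp only [Matrix.SpecialLinearGroup.coe_mul]
  simp [Amat, Matrix.mul_apply, Fin.sum_univ_two]

lemma Amat_inv_mul_apply (g : Matrix.SpecialLinearGroup (Fin 2) ℤ) (j : Fin 2) :
    (Amat⁻¹ * g) 0 j = g 0 j - 2 * g 1 j ∧ (Amat⁻¹ * g) 1 j = g 1 j := by
  have h := Amat_mul_apply (Amat⁻¹ * g) j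
  rw [mul_inv_cancel_left] at h
  constructor <;> linarith [h.1, h.2]

lemma Bmat_mul_apply (g : Matrix.SpecialLinearGroup (Fin 2) ℤ) (j : Fin 2) :
    (Bmat * g) 0 j = g 0 j ∧ (Bmat * g) 1 j = g 1 j + 2 * g 0 j := by
  simp only [Matrix.SpecialLinearGroup.coe_mul]
  simp [Bmat, Matrix.mul_apply, Fin.sum_univ_two, add_comm]

lemma Bmat_inv_mul_apply (g : Matrix.SpecialLinearGroup (Fin 2) ℤ) (j : Fin 2) :
    (Bmat⁻¹ * g) 0 j = g 0 j ∧ (Bmat⁻¹ * g) 1 j = g 1 j - 2 * g 0 j := by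
  have h := Bmat_mul_apply (Bmat⁻¹ * g) j
  rw [mul_inv_cancel_left] at h
  constructor <;> linarith [h.1, h.2]

lemma det_eq_one (g : Matrix.SpecialLinearGroup (Fin 2) ℤ) :
    g 0 0 * g 1 1 - g 0 1 * g 1 0 = 1 := by
  rw [← Matrix.det_fin_two, g.det_coe]

lemma mem_Gamma2_iff (g : Matrix.SpecialLinearGroup (Fin 2) ℤ) :
    g ∈ Gamma2 ↔ g 0 0 % 2 = 1 ∧ g 0 1 % 2 = 0 ∧ g 1 0 % 2 = 0 ∧ g 1 1 % 2 = 1 := by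
  have h1 (x : ℤ) : (x : ZMod 2) = 1 ↔ x % 2 = 1 := by
    have := ZMod.intCast_eq_intCast_iff' x 1 2
    simpa using this
  have h0 (x : ℤ) : (x : ZMod 2) = 0 ↔ x % 2 = 0 := by
    have := ZMod.intCast_eq_intCast_iff' x 0 2
    simpa using this
  rw [Gamma2, CongruenceSubgroup.Gamma_mem, h1, h1, h0, h0]

lemma Amat_mem : Amat ∈ Gamma2 := by
  rw [mem_Gamma2_iff]; simp [Amat]

lemma Bmat_mem : Bmat ∈ Gamma2 := by
  rw [mem_Gamma2_iff]; simp [Bmat]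

/-! ### Generation of `Γ(2)` -/

/-- The property `g = ± w(A, B)` is insensitive to left multiplication by a word. -/
lemma word_of_mul {g : Matrix.SpecialLinearGroup (Fin 2) ℤ} (v : FreeGroup Bool)
    (h : ∃ w, word v * g = word w ∨ word v * g = -word w) :
    ∃ w, g = word w ∨ g = -word w := by
  obtain ⟨w, h⟩ := h
  refine ⟨v⁻¹ * w, ?_⟩
  rw [map_mul, map_inv]
  rcases h with h | h
  · left; rw [← h, inv_mul_cancel_left]
  · right; rw [← mul_neg, ← h, inv_mul_cancel_left]

lemma Amat_zpow_apply (k : ℤ) :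
    ((Amat ^ k : Matrix.SpecialLinearGroup (Fin 2) ℤ) : Matrix (Fin 2) (Fin 2) ℤ)
      = !![1, 2 * k; 0, 1] := by
  have h : Amat = ModularGroup.T ^ (2 : ℤ) := by
    ext i j
    rw [ModularGroup.coe_T_zpow]
    rfl
  rw [h, ← _root_.zpow_mul, ModularGroup.coe_T_zpow]

/-- `Γ(2)` is generated by `A`, `B` and `-1`: as long as the lower left entry is nonzero, the two
entries of the first column have different parity, and one of `A^{±1}`, `B^{±1}` decreases the sum
of their absolute values. -/
lemma mem_Gamma2_word (g : Matrix.SpecialLinearGroup (Fin 2) ℤ) (hg : g ∈ Gamma2) :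
    ∃ w, g = word w ∨ g = -word w := by
  induction hm : (g 0 0).natAbs + (g 1 0).natAbs using Nat.strong_induction_on generalizing g with
  | _ m ih =>
  subst hm
  have hpar := (mem_Gamma2_iff g).1 hg
  have step (v : FreeGroup Bool) (hv : word v ∈ Gamma2)
      (hlt : ((word v * g) 0 0).natAbs + ((word v * g) 1 0).natAbs
        < (g 0 0).natAbs + (g 1 0).natAbs) : ∃ w, g = word w ∨ g = -word w :=
    word_of_mul v (ih _ hlt _ (mul_mem hv hg) rfl)
  have hA := Amat_mul_apply g 0
  have hA' := Amat_inv_mul_apply g 0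
  have hB := Bmat_mul_apply g 0
  have hB' := Bmat_inv_mul_apply g 0
  by_cases hc : g 1 0 = 0
  · have hdet := det_eq_one g
    rw [hc, mul_zero, sub_zero] at hdet
    obtain ⟨k, hk⟩ : ∃ k, g 0 1 = 2 * k := ⟨g 0 1 / 2, by omega⟩
    rcases Int.eq_one_or_neg_one_of_mul_eq_one' hdet with ⟨ha, hd⟩ | ⟨ha, hd⟩
    · refine ⟨FreeGroup.of true ^ k, Or.inl ?_⟩
      ext i j
      rw [map_zpow, word_true, Amat_zpow_apply]
      fin_cases i <;> fin_cases j <;> simp [ha, hd, hk, hc]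
    · refine ⟨FreeGroup.of true ^ (-k), Or.inr ?_⟩
      ext i j
      rw [map_zpow, word_true, Matrix.SpecialLinearGroup.coe_neg, Amat_zpow_apply]
      fin_cases i <;> fin_cases j <;> simp [ha, hd, hk, hc]
  by_cases hac : (g 1 0).natAbs < (g 0 0).natAbs
  · by_cases hs : (0 < g 0 0 ∧ 0 < g 1 0) ∨ (g 0 0 < 0 ∧ g 1 0 < 0)
    · refine step (FreeGroup.of true)⁻¹ (by simpa using Amat_mem) ?_
      rw [map_inv, word_true, hA'.1, hA'.2]
      omega
    · refine step (FreeGroup.of true) (by simpa using Amat_mem) ?_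
      rw [word_true, hA.1, hA.2]
      omega
  · by_cases hs : (0 < g 0 0 ∧ 0 < g 1 0) ∨ (g 0 0 < 0 ∧ g 1 0 < 0)
    · refine step (FreeGroup.of false)⁻¹ (by simpa using Bmat_mem) ?_
      rw [map_inv, word_false, hB'.1, hB'.2]
      omega
    · refine step (FreeGroup.of false) (by simpa using Bmat_mem) ?_
      rw [word_false, hB.1, hB.2]
      omega

/-! ### Freeness of `A`, `B` -/

/-- Every word in `A`, `B` has upper left entry `≡ 1 mod 4`. -/
lemma word_mod_four (w : FreeGroup Bool) : word w 0 0 % 4 = 1 ∧ word w 1 0 % 2 = 0 := by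
  have key : ∀ g : Matrix.SpecialLinearGroup (Fin 2) ℤ, g 0 0 % 4 = 1 ∧ g 1 0 % 2 = 0 →
      (word w * g) 0 0 % 4 = 1 ∧ (word w * g) 1 0 % 2 = 0 := by
    induction w using FreeGroup.induction_on with
    | C1 => simp
    | of t =>
      intro g hg
      have hA := Amat_mul_apply g 0
      have hB := Bmat_mul_apply g 0
      cases t
      · rw [word_false]; omega
      · rw [word_true]; omega
    | inv_of t _ =>
      intro g hg
      have hA := Amat_inv_mul_apply g 0
      have hB := Bmat_inv_mul_apply g 0
      cases t
      · rw [map_inv, word_false]; omega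
      · rw [map_inv, word_true]; omega
    | mul x y hx hy =>
      intro g hg
      rw [map_mul, mul_assoc]
      exact hx _ (hy _ hg)
  simpa using key 1 (by simp)

/-- Attracting sets for ping-pong, as conditions on the slope `x = a / c` of the first column
`(a, c)`: `x ∈ [1, ∞]` for `A` and `x ∈ [0, 1)` for `B`. The signs are spelled out to keep the
conditions linear in `a` and `c`. -/
def attracting : Bool → Set (Matrix.SpecialLinearGroup (Fin 2) ℤ)
  | true => {g | g 1 0 = 0 ∨ (0 < g 1 0 ∧ g 1 0 ≤ g 0 0) ∨ (g 1 0 < 0 ∧ g 0 0 ≤ g 1 0)}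
  | false => {g | g 0 0 = 0 ∨ (0 < g 0 0 ∧ g 0 0 < g 1 0) ∨ (g 0 0 < 0 ∧ g 1 0 < g 0 0)}

/-- Repelling sets for ping-pong, as conditions on the slope `x = a / c` of the first column
`(a, c)`: `x ∈ (-∞, -1)` for `A` and `x ∈ [-1, 0)` for `B`. -/
def repelling : Bool → Set (Matrix.SpecialLinearGroup (Fin 2) ℤ)
  | true => {g | (0 < g 1 0 ∧ g 0 0 < -g 1 0) ∨ (g 1 0 < 0 ∧ -g 1 0 < g 0 0)}
  | false => {g | (0 < g 0 0 ∧ g 1 0 ≤ -g 0 0) ∨ (g 0 0 < 0 ∧ -g 0 0 ≤ g 1 0)}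

lemma first_col_ne_zero (g : Matrix.SpecialLinearGroup (Fin 2) ℤ) (h : g 0 0 = 0) :
    g 1 0 ≠ 0 := by
  intro h'
  have := det_eq_one g
  simp [h, h'] at this

/-- `A` and `B` freely generate, by ping-pong for left multiplication of `SL(2, ℤ)` on itself,
where only the slope of the first column is looked at. -/
lemma word_injective : Function.Injective word := by
  refine FreeGroup.injective_lift_of_ping_pong _ attracting repelling ?_ ?_ ?_ ?_ ?_ ?_
  · intro t
    cases t
    · exact ⟨Bmat, Or.inr (Or.inl (by simp [Bmat]))⟩
    · exact ⟨1, Or.inl (by simp)⟩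
  · intro s t hst
    refine Set.disjoint_left.2 fun g hs ht => ?_
    have h0 := first_col_ne_zero g
    cases s <;> cases t <;> simp only [attracting, Set.mem_ofPred_eq, ne_eq] at * <;>
      first | omega | trivial
  · intro s t hst
    refine Set.disjoint_left.2 fun g hs ht => ?_
    cases s <;> cases t <;> simp only [repelling, Set.mem_ofPred_eq, ne_eq] at * <;>
      first | omega | trivial
  · intro s t
    refine Set.disjoint_left.2 fun g hs ht => ?_
    have h0 := first_col_ne_zero g
    cases s <;> cases t <;> simp only [attracting, repelling, Set.mem_ofPred_eq] at * <;> omega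
  · rintro t _ ⟨g, hg, rfl⟩
    have h0 := first_col_ne_zero g
    have hA := Amat_mul_apply g 0
    have hB := Bmat_mul_apply g 0
    cases t
    · simp only [repelling, attracting, Set.mem_compl_iff, Set.mem_ofPred_eq, smul_eq_mul,
        Bool.false_eq_true, if_false, hB.1, hB.2] at hg ⊢
      omega
    · simp only [repelling, attracting, Set.mem_compl_iff, Set.mem_ofPred_eq, smul_eq_mul,
        if_true, hA.1, hA.2] at hg ⊢
      omega
  · rintro t _ ⟨g, hg, rfl⟩
    have h0 := first_col_ne_zero g
    have hA := Amat_inv_mul_apply g 0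
    have hB := Bmat_inv_mul_apply g 0
    cases t
    · simp only [repelling, attracting, Set.mem_compl_iff, Set.mem_ofPred_eq, smul_eq_mul,
        Pi.inv_apply, Bool.false_eq_true, if_false, hB.1, hB.2] at hg ⊢
      omega
    · simp only [repelling, attracting, Set.mem_compl_iff, Set.mem_ofPred_eq, smul_eq_mul,
        Pi.inv_apply, if_true, hA.1, hA.2] at hg ⊢
      omega

/-! ### The subgroup cut out by exponent sums -/

/-- The matrices `± w(A, B)` for words `w` whose exponent sums vanish modulo `n`. -/
def expSub (n : ℕ) : Subgroup (Matrix.SpecialLinearGroup (Fin 2) ℤ) where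
  carrier := {g | ∃ w, expSum n w = 1 ∧ (g = word w ∨ g = -word w)}
  one_mem' := ⟨1, by simp⟩
  mul_mem' := by
    rintro g h ⟨v, hv, hg⟩ ⟨w, hw, hh⟩
    refine ⟨v * w, by simp [hv, hw], ?_⟩
    rcases hg with rfl | rfl <;> rcases hh with rfl | rfl <;> simp
  inv_mem' := by
    rintro g ⟨v, hv, hg⟩
    refine ⟨v⁻¹, by simp [hv], ?_⟩
    rcases hg with rfl | rfl <;> simp

lemma PhiPM_le_expSub (n : ℕ) : PhiPM n ≤ expSub n := by
  refine sup_le ((Subgroup.closure_le _).2 ?_) (Subgroup.commutator_le.2 ?_)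
  · rintro g (rfl | rfl | rfl)
    · exact ⟨FreeGroup.of true ^ n, by simp [expSum, ← ofAdd_nsmul], by simp⟩
    · exact ⟨FreeGroup.of false ^ n, by simp [expSum, ← ofAdd_nsmul], by simp⟩
    · exact ⟨1, by simp, by simp⟩
  · intro g hg h hh
    obtain ⟨v, hv⟩ := mem_Gamma2_word g hg
    obtain ⟨w, hw⟩ := mem_Gamma2_word h hh
    refine ⟨v * w * v⁻¹ * w⁻¹, ?_, Or.inl ?_⟩
    · simp only [map_mul, map_inv]
      rw [mul_right_comm, mul_inv_cancel_right, mul_inv_cancel]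
    · simp only [map_mul, map_inv]
      rcases hv with rfl | rfl <;> rcases hw with rfl | rfl <;> simp [commutatorElement_def]

/-- Freeness together with `-1 ∉ ⟨A, B⟩` makes the exponent sums of `word w` well defined. -/
lemma expSum_eq_one_of_mem {n : ℕ} {w : FreeGroup Bool} (h : word w ∈ expSub n) :
    expSum n w = 1 := by
  obtain ⟨v, hv, h | h⟩ := h
  · rwa [word_injective h]
  · have h1 := (word_mod_four w).1
    have h2 := (word_mod_four v).1
    have h3 : word w 0 0 = -(word v 0 0) := by rw [h]; simp
    omega

/-! ### Normal form modulo commutators -/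

instance : Gamma2.Normal := CongruenceSubgroup.Gamma_normal 2

lemma mk_commute : Commute (QuotientGroup.mk' ⁅Gamma2, Gamma2⁆ Amat)
    (QuotientGroup.mk' ⁅Gamma2, Gamma2⁆ Bmat) := by
  rw [← commutatorElement_eq_one_iff_commute, ← map_commutatorElement]
  exact (QuotientGroup.eq_one_iff _).2 (Subgroup.commutator_mem_commutator Amat_mem Bmat_mem)

/-- Modulo `Γ(2)'` every word in `A`, `B` becomes `A^p B^q`. -/
lemma word_mod_commutator (w : FreeGroup Bool) : ∃ p q : ℤ,
    QuotientGroup.mk' ⁅Gamma2, Gamma2⁆ (word w) =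
      QuotientGroup.mk' ⁅Gamma2, Gamma2⁆ Amat ^ p *
        QuotientGroup.mk' ⁅Gamma2, Gamma2⁆ Bmat ^ q := by
  set π := QuotientGroup.mk' ⁅Gamma2, Gamma2⁆
  have hcomm : Commute (π Amat) (π Bmat) := mk_commute
  induction w using FreeGroup.induction_on with
  | C1 => exact ⟨0, 0, by simp⟩
  | of t =>
    cases t
    · exact ⟨0, 1, by simp⟩
    · exact ⟨1, 0, by simp⟩
  | inv_of t _ =>
    cases t
    · exact ⟨0, -1, by simp⟩
    · exact ⟨-1, 0, by simp⟩
  | mul x y hx hy =>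
    obtain ⟨p, q, hx⟩ := hx
    obtain ⟨p', q', hy⟩ := hy
    refine ⟨p + p', q + q', ?_⟩
    rw [map_mul, map_mul, hx, hy, _root_.zpow_add, _root_.zpow_add, mul_assoc, mul_assoc,
      (hcomm.zpow_zpow p' q).left_comm]

/-- Reducing the exponents of `A^p B^q` modulo `n` gives a representative for every word. -/
lemma exists_rep (n : ℕ) (hn : 1 ≤ n) (w : FreeGroup Bool) : ∃ i j : Fin n,
    word w * (Amat ^ (i : ℕ) * Bmat ^ (j : ℕ))⁻¹ ∈ PhiPM n := by
  obtain ⟨p, q, h⟩ := word_mod_commutator w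
  have hn' : (0 : ℤ) < n := by omega
  have red (r : ℤ) : ∃ (i : Fin n) (k : ℤ), r = n * k + (i : ℕ) := by
    have h1 := Int.emod_nonneg r hn'.ne'
    have h2 := Int.emod_lt_of_pos r hn'
    refine ⟨⟨(r % n).toNat, by omega⟩, r / n, ?_⟩
    rw [Int.toNat_of_nonneg h1, Int.mul_ediv_add_emod]
  obtain ⟨i, k, rfl⟩ := red p
  obtain ⟨j, l, rfl⟩ := red q
  refine ⟨i, j, ?_⟩
  have hA : (Amat ^ n) ^ k ∈ PhiPM n :=
    zpow_mem (Subgroup.mem_sup_left (Subgroup.subset_closure (by simp))) k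
  have hB : (Bmat ^ n) ^ l ∈ PhiPM n :=
    zpow_mem (Subgroup.mem_sup_left (Subgroup.subset_closure (by simp))) l
  have hdiff : (word w * (Amat ^ (i : ℕ) * Bmat ^ (j : ℕ))⁻¹) *
      ((Amat ^ n) ^ k * (Bmat ^ n) ^ l)⁻¹ ∈ ⁅Gamma2, Gamma2⁆ := by
    rw [← QuotientGroup.eq_one_iff, ← QuotientGroup.mk'_apply]
    have hcomm := mk_commute
    simp only [map_mul, map_inv, map_pow, map_zpow, h]
    rw [mul_inv_eq_one, mul_inv_eq_iff_eq_mul, _root_.zpow_add, _root_.zpow_add,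
      _root_.zpow_mul, _root_.zpow_mul, zpow_natCast, zpow_natCast, zpow_natCast, zpow_natCast,
      mul_assoc, mul_assoc, (((hcomm.pow_right n).zpow_right l).pow_left i).left_comm]
  have := mul_mem (Subgroup.mem_sup_right hdiff : _ ∈ PhiPM n) (mul_mem hA hB)
  rwa [inv_mul_cancel_right] at this

/-- For every `n ≥ 1` and every `g ∈ Γ(2)`, there is exactly one pair `(i, j)` with
`0 ≤ i, j ≤ n-1` such that `g * (A^i B^j)⁻¹ ∈ Φ±(n)`: the matrices `A^i B^j` form a complete
set of right coset representatives of `Φ(n)` in `Γ(2)` modulo `±I`. -/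
theorem exists_unique_coset_rep_Phi_in_Gamma2 (n : ℕ) (hn : 1 ≤ n)
    (g : Matrix.SpecialLinearGroup (Fin 2) ℤ) (hg : g ∈ Gamma2) :
    ∃! p : Fin n × Fin n,
      g * (Amat ^ (p.1 : ℕ) * Bmat ^ (p.2 : ℕ))⁻¹ ∈ PhiPM n := by
  have hneg : (-1 : Matrix.SpecialLinearGroup (Fin 2) ℤ) ∈ PhiPM n :=
    Subgroup.mem_sup_left (Subgroup.subset_closure (by simp))
  obtain ⟨w, hw⟩ := mem_Gamma2_word g hg
  obtain ⟨i, j, hij⟩ := exists_rep n hn w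
  refine existsUnique_of_exists_of_unique ⟨(i, j), ?_⟩ ?_
  · rcases hw with rfl | rfl
    · exact hij
    · simpa using mul_mem hneg hij
  · rintro ⟨a, b⟩ ⟨c, d⟩ hab hcd
    -- the quotient of the two memberships no longer involves `g`
    have hq := PhiPM_le_expSub n (mul_mem (inv_mem hab) hcd)
    let v : FreeGroup Bool := FreeGroup.of true ^ (a : ℕ) * FreeGroup.of false ^ (b : ℕ) *
      (FreeGroup.of true ^ (c : ℕ) * FreeGroup.of false ^ (d : ℕ))⁻¹
    have hv : word v ∈ expSub n := by
      convert hq using 1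
      simp only [v, map_mul, map_inv, map_pow, word_true, word_false]
      group
    have he := expSum_eq_one_of_mem hv
    simp only [v, map_mul, map_inv, map_pow, mul_inv_eq_one] at he
    simp only [expSum, FreeGroup.lift_apply_of, ← ofAdd_nsmul, ← ofAdd_add] at he
    have he' := Multiplicative.ofAdd.injective he
    simp only [Bool.false_eq_true, if_true, if_false, Prod.smul_mk, Prod.mk_add_mk, Prod.mk.injEq,
      nsmul_eq_mul, mul_one, smul_zero, add_zero, zero_add, ZMod.natCast_eq_natCast_iff'] at he'
    rw [Nat.mod_eq_of_lt a.2, Nat.mod_eq_of_lt b.2, Nat.mod_eq_of_lt c.2,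
      Nat.mod_eq_of_lt d.2] at he'
    exact Prod.ext (Fin.ext he'.1) (Fin.ext he'.2)
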